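/- Under the adapted pure-frontal setup with focal data, assume κ_t(0) ≠ 0, that 0 is a singular point of the focal surface C_j ((V_jρ_j)(0) = 0), that this singular point is non-degenerate (the gradient of V_jρ_j at 0 is nonzero), and that (V_jκ_j)(0) = 0. Then 0 is an at least second order V_j-ridge point of f, i.e. (V_jV_jκ_j)(0) = 0, if and only if ∂_v(V_jρ_j)(0) = 0, which is equivalent to saying that the tangent direction at 0 of the singular curve {V_jρ_j = 0} of C_j is parallel to the null direction ∂_v, i.e. 0 is a singular point of the second kind of C_j (otherwise it is of the first kind). -/

import Mathlib

open Filter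

noncomputable section

/-- Vectors in ℝ³, modeled as `Fin 3 → ℝ`. -/
abbrev R3 : Type := Fin 3 → ℝ

/-- The Euclidean inner product on ℝ³. -/
def dot3 (a b : R3) : ℝ := a 0 * b 0 + a 1 * b 1 + a 2 * b 2

/-- The Euclidean norm on ℝ³. -/
def norm3 (a : R3) : ℝ := Real.sqrt (dot3 a a)

/-- Partial derivative in the `u`-direction. -/
def pu {E : Type*} [NormedAddCommGroup E] [NormedSpace ℝ E] (F : ℝ × ℝ → E) (p : ℝ × ℝ) : E :=
  fderiv ℝ F p (1, 0)

/-- Partial derivative in the `v`-direction. -/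
def pv {E : Type*} [NormedAddCommGroup E] [NormedSpace ℝ E] (F : ℝ × ℝ → E) (p : ℝ × ℝ) : E :=
  fderiv ℝ F p (0, 1)

/-- The adapted pure-frontal setup: `f` is a frontal with unit normal `ν`,
`f_v = v·h`, `ν_v = v·ν₁`, the frame `{f_u, h, ν}` is linearly independent everywhere
and orthonormal along the `u`-axis. -/
structure AdaptedPureFrontal (f ν h ν₁ : ℝ × ℝ → R3) : Prop where
  smooth_f : ContDiff ℝ (⊤ : ℕ∞) f
  smooth_ν : ContDiff ℝ (⊤ : ℕ∞) ν
  smooth_h : ContDiff ℝ (⊤ : ℕ∞) h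
  smooth_ν₁ : ContDiff ℝ (⊤ : ℕ∞) ν₁
  unit_ν : ∀ p, dot3 (ν p) (ν p) = 1
  orth_fu_ν : ∀ p, dot3 (pu f p) (ν p) = 0
  orth_fv_ν : ∀ p, dot3 (pv f p) (ν p) = 0
  fv_eq : ∀ p : ℝ × ℝ, pv f p = p.2 • h p
  νv_eq : ∀ p : ℝ × ℝ, pv ν p = p.2 • ν₁ p
  indep : ∀ p, LinearIndependent ℝ ![pu f p, h p, ν p]
  adapted_fu : ∀ u : ℝ, dot3 (pu f (u, 0)) (pu f (u, 0)) = 1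
  adapted_h : ∀ u : ℝ, dot3 (h (u, 0)) (h (u, 0)) = 1
  adapted_fu_h : ∀ u : ℝ, dot3 (pu f (u, 0)) (h (u, 0)) = 0
  adapted_h_ν : ∀ u : ℝ, dot3 (h (u, 0)) (ν (u, 0)) = 0

/-- Ẽ = ⟨f_u, f_u⟩. -/
def Et (f : ℝ × ℝ → R3) (p : ℝ × ℝ) : ℝ := dot3 (pu f p) (pu f p)

/-- F̃ = ⟨f_u, h⟩. -/
def Ft (f h : ℝ × ℝ → R3) (p : ℝ × ℝ) : ℝ := dot3 (pu f p) (h p)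

/-- G̃ = ⟨h, h⟩. -/
def Gt (h : ℝ × ℝ → R3) (p : ℝ × ℝ) : ℝ := dot3 (h p) (h p)

/-- L̃ = −⟨f_u, ν_u⟩. -/
def Lt (f ν : ℝ × ℝ → R3) (p : ℝ × ℝ) : ℝ := -dot3 (pu f p) (pu ν p)

/-- M̃ = −⟨h, ν_u⟩. -/
def Mt (h ν : ℝ × ℝ → R3) (p : ℝ × ℝ) : ℝ := -dot3 (h p) (pu ν p)

/-- Ñ₁ = −⟨h, ν₁⟩. -/
def Nt1 (h ν₁ : ℝ × ℝ → R3) (p : ℝ × ℝ) : ℝ := -dot3 (h p) (ν₁ p)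

/-- The Gaussian curvature K = (L̃Ñ₁ − M̃²)/(ẼG̃ − F̃²). -/
def Kg (f ν h ν₁ : ℝ × ℝ → R3) (p : ℝ × ℝ) : ℝ :=
  (Lt f ν p * Nt1 h ν₁ p - Mt h ν p ^ 2) / (Et f p * Gt h p - Ft f h p ^ 2)

/-- The mean curvature H = (ẼÑ₁ − 2F̃M̃ + G̃L̃)/(2(ẼG̃ − F̃²)). -/
def Hm (f ν h ν₁ : ℝ × ℝ → R3) (p : ℝ × ℝ) : ℝ :=
  (Et f p * Nt1 h ν₁ p - 2 * Ft f h p * Mt h ν p + Gt h p * Lt f ν p) /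
    (2 * (Et f p * Gt h p - Ft f h p ^ 2))

/-- The principal curvature κ = H + ε√(H² − K); `ε = 1` gives κ₁ and `ε = -1` gives κ₂. -/
def kap (f ν h ν₁ : ℝ × ℝ → R3) (ε : ℝ) (p : ℝ × ℝ) : ℝ :=
  Hm f ν h ν₁ p + ε * Real.sqrt (Hm f ν h ν₁ p ^ 2 - Kg f ν h ν₁ p)

/-- First component of the principal vector field V = −v(M̃ − κF̃)∂_u + (L̃ − κẼ)∂_v. -/
def V1c (f ν h ν₁ : ℝ × ℝ → R3) (ε : ℝ) (p : ℝ × ℝ) : ℝ :=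
  -(p.2 * (Mt h ν p - kap f ν h ν₁ ε p * Ft f h p))

/-- Second component of the principal vector field V = −v(M̃ − κF̃)∂_u + (L̃ − κẼ)∂_v. -/
def V2c (f ν h ν₁ : ℝ × ℝ → R3) (ε : ℝ) (p : ℝ × ℝ) : ℝ :=
  Lt f ν p - kap f ν h ν₁ ε p * Et f p

/-- Directional derivative of `g` along the principal vector field V. -/
def VD (f ν h ν₁ : ℝ × ℝ → R3) (ε : ℝ) {E : Type*} [NormedAddCommGroup E] [NormedSpace ℝ E]
    (g : ℝ × ℝ → E) (p : ℝ × ℝ) : E :=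
  V1c f ν h ν₁ ε p • pu g p + V2c f ν h ν₁ ε p • pv g p

/-- The radius of principal curvature ρ = 1/κ. -/
def rho (f ν h ν₁ : ℝ × ℝ → R3) (ε : ℝ) (p : ℝ × ℝ) : ℝ := (kap f ν h ν₁ ε p)⁻¹

/-- The focal surface C = f + ρ·ν. -/
def Cf (f ν h ν₁ : ℝ × ℝ → R3) (ε : ℝ) (p : ℝ × ℝ) : R3 :=
  f p + rho f ν h ν₁ ε p • ν p

/-- The normal direction x = −(M̃ − κF̃)·f_u + (L̃ − κẼ)·h of the focal surface. -/
def xj (f ν h ν₁ : ℝ × ℝ → R3) (ε : ℝ) (p : ℝ × ℝ) : R3 :=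
  (-(Mt h ν p - kap f ν h ν₁ ε p * Ft f h p)) • pu f p +
    (Lt f ν p - kap f ν h ν₁ ε p * Et f p) • h p

/-- The unit normal e = x/‖x‖ of the focal surface. -/
def ej (f ν h ν₁ : ℝ × ℝ → R3) (ε : ℝ) (p : ℝ × ℝ) : R3 :=
  (norm3 (xj f ν h ν₁ ε p))⁻¹ • xj f ν h ν₁ ε p

/-- The limiting normal curvature κ_ν(u) = L̃(u,0). -/
def kν (f ν : ℝ × ℝ → R3) (u : ℝ) : ℝ := Lt f ν (u, 0)

/-- The cuspidal torsion κ_t(u) = M̃(u,0). -/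
def kt (h ν : ℝ × ℝ → R3) (u : ℝ) : ℝ := Mt h ν (u, 0)

/-- The bias r_b(u) = 3Ñ₁(u,0). -/
def rb (h ν₁ : ℝ × ℝ → R3) (u : ℝ) : ℝ := 3 * Nt1 h ν₁ (u, 0)

/-- The secondary cuspidal curvature r_c(u) = 24((Ñ₁)_v − 2F̃_vM̃ − G̃_vÑ₁)(u,0). -/
def rc (f ν h ν₁ : ℝ × ℝ → R3) (u : ℝ) : ℝ :=
  24 * (pv (Nt1 h ν₁) (u, 0) - 2 * pv (Ft f h) (u, 0) * Mt h ν (u, 0) -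
    pv (Gt h) (u, 0) * Nt1 h ν₁ (u, 0))

/-- The singular curvature κ_s(u) = ⟨f_uu, h⟩(u,0). -/
def ks (f h : ℝ × ℝ → R3) (u : ℝ) : ℝ := dot3 (pu (pu f) (u, 0)) (h (u, 0))

/-- The rank of the differential of `F` at `p`. -/
def rankAt (F : ℝ × ℝ → R3) (p : ℝ × ℝ) : ℕ :=
  Module.finrank ℝ (LinearMap.range (fderiv ℝ F p).toLinearMap)

/-!
On the singular axis `v = 0` the principal field `V` is the multiple `L̃ - κ` of `∂_v`. There
`H² - K = ((L̃ - Ñ₁)/2)² + κ_t²` and `(L̃ - κ)(Ñ₁ - κ) = κ_t²`, so `κ_t ≠ 0` makes `κ` smooth and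
the factor `L̃ - κ` nonzero; hence `VVκ` vanishes exactly when `∂_v(Vκ)` does. On the other hand
`Vρ = -κ⁻² Vκ`, so at a zero of `Vκ` the differentials of `Vρ` and `Vκ` are proportional with
the nonzero factor `-κ⁻²`.
-/

open scoped ContDiff

section ContDiffAt

variable {f ν h ν₁ : ℝ × ℝ → R3} {ε : ℝ} {p : ℝ × ℝ} {m n : ℕ∞ω}

lemma contDiffAt_pu {E : Type*} [NormedAddCommGroup E] [NormedSpace ℝ E] {F : ℝ × ℝ → E}
    (hF : ContDiffAt ℝ n F p) (hmn : m + 1 ≤ n) : ContDiffAt ℝ m (pu F) p :=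
  (hF.fderiv_right hmn).clm_apply contDiffAt_const

lemma contDiffAt_pv {E : Type*} [NormedAddCommGroup E] [NormedSpace ℝ E] {F : ℝ × ℝ → E}
    (hF : ContDiffAt ℝ n F p) (hmn : m + 1 ≤ n) : ContDiffAt ℝ m (pv F) p :=
  (hF.fderiv_right hmn).clm_apply contDiffAt_const

lemma contDiffAt_dot3 {a b : ℝ × ℝ → R3} (ha : ContDiffAt ℝ n a p) (hb : ContDiffAt ℝ n b p) :
    ContDiffAt ℝ n (fun q ↦ dot3 (a q) (b q)) p := by
  have hab (i : Fin 3) : ContDiffAt ℝ n (fun q ↦ a q i * b q i) p :=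
    (contDiffAt_pi.1 ha i).mul (contDiffAt_pi.1 hb i)
  exact ((hab 0).add (hab 1)).add (hab 2)

lemma contDiffAt_Et (hf : ContDiffAt ℝ (n + 1) f p) : ContDiffAt ℝ n (Et f) p :=
  contDiffAt_dot3 (contDiffAt_pu hf le_rfl) (contDiffAt_pu hf le_rfl)

lemma contDiffAt_Ft (hf : ContDiffAt ℝ (n + 1) f p) (hh : ContDiffAt ℝ n h p) :
    ContDiffAt ℝ n (Ft f h) p :=
  contDiffAt_dot3 (contDiffAt_pu hf le_rfl) hh

lemma contDiffAt_Gt (hh : ContDiffAt ℝ n h p) : ContDiffAt ℝ n (Gt h) p :=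
  contDiffAt_dot3 hh hh

lemma contDiffAt_Lt (hf : ContDiffAt ℝ (n + 1) f p) (hν : ContDiffAt ℝ (n + 1) ν p) :
    ContDiffAt ℝ n (Lt f ν) p :=
  (contDiffAt_dot3 (contDiffAt_pu hf le_rfl) (contDiffAt_pu hν le_rfl)).neg

lemma contDiffAt_Mt (hh : ContDiffAt ℝ n h p) (hν : ContDiffAt ℝ (n + 1) ν p) :
    ContDiffAt ℝ n (Mt h ν) p :=
  (contDiffAt_dot3 hh (contDiffAt_pu hν le_rfl)).neg

lemma contDiffAt_Nt1 (hh : ContDiffAt ℝ n h p) (hν₁ : ContDiffAt ℝ n ν₁ p) :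
    ContDiffAt ℝ n (Nt1 h ν₁) p :=
  (contDiffAt_dot3 hh hν₁).neg

lemma contDiffAt_kap (hf : ContDiffAt ℝ (n + 1) f p) (hν : ContDiffAt ℝ (n + 1) ν p)
    (hh : ContDiffAt ℝ n h p) (hν₁ : ContDiffAt ℝ n ν₁ p)
    (hdet : Et f p * Gt h p - Ft f h p ^ 2 ≠ 0)
    (hHK : Hm f ν h ν₁ p ^ 2 - Kg f ν h ν₁ p ≠ 0) :
    ContDiffAt ℝ n (kap f ν h ν₁ ε) p := by
  have hE := contDiffAt_Et hf
  have hF := contDiffAt_Ft hf hh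
  have hG := contDiffAt_Gt hh
  have hL := contDiffAt_Lt hf hν
  have hM := contDiffAt_Mt hh hν
  have hN := contDiffAt_Nt1 hh hν₁
  have hD : ContDiffAt ℝ n (fun q ↦ Et f q * Gt h q - Ft f h q ^ 2) p :=
    (hE.mul hG).sub (hF.pow 2)
  have hK : ContDiffAt ℝ n (Kg f ν h ν₁) p := ((hL.mul hN).sub (hM.pow 2)).div hD hdet
  have hH : ContDiffAt ℝ n (Hm f ν h ν₁) p :=
    (((hE.mul hN).sub ((contDiffAt_const.mul hF).mul hM)).add (hG.mul hL)).div
      (contDiffAt_const.mul hD) (mul_ne_zero two_ne_zero hdet)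
  exact hH.add (contDiffAt_const.mul (((hH.pow 2).sub hK).sqrt hHK))

lemma contDiffAt_VD {E : Type*} [NormedAddCommGroup E] [NormedSpace ℝ E] {g : ℝ × ℝ → E}
    (hf : ContDiffAt ℝ (n + 1) f p) (hν : ContDiffAt ℝ (n + 1) ν p) (hh : ContDiffAt ℝ n h p)
    (hκ : ContDiffAt ℝ n (kap f ν h ν₁ ε) p) (hg : ContDiffAt ℝ (n + 1) g p) :
    ContDiffAt ℝ n (VD f ν h ν₁ ε g) p := by
  have hV1 : ContDiffAt ℝ n (V1c f ν h ν₁ ε) p :=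
    (contDiffAt_snd.mul ((contDiffAt_Mt hh hν).sub (hκ.mul (contDiffAt_Ft hf hh)))).neg
  have hV2 : ContDiffAt ℝ n (V2c f ν h ν₁ ε) p :=
    (contDiffAt_Lt hf hν).sub (hκ.mul (contDiffAt_Et hf))
  exact (hV1.smul (contDiffAt_pu hg le_rfl)).add (hV2.smul (contDiffAt_pv hg le_rfl))

end ContDiffAt

section PrincipalField

variable {f ν h ν₁ : ℝ × ℝ → R3} {ε : ℝ} {p : ℝ × ℝ}

lemma kap_characteristic_eq (hε : ε = 1 ∨ ε = -1)
    (hdet : Et f p * Gt h p - Ft f h p ^ 2 ≠ 0)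
    (hHK : 0 ≤ Hm f ν h ν₁ p ^ 2 - Kg f ν h ν₁ p) :
    (Lt f ν p - kap f ν h ν₁ ε p * Et f p) * (Nt1 h ν₁ p - kap f ν h ν₁ ε p * Gt h p) =
      (Mt h ν p - kap f ν h ν₁ ε p * Ft f h p) ^ 2 := by
  have hquad : kap f ν h ν₁ ε p ^ 2 - 2 * Hm f ν h ν₁ p * kap f ν h ν₁ ε p + Kg f ν h ν₁ p = 0 := by
    have hsqrt := Real.sq_sqrt hHK
    have hε2 : ε ^ 2 = 1 := sq_eq_one_iff.2 hε
    rw [kap]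
    linear_combination hsqrt + √(Hm f ν h ν₁ p ^ 2 - Kg f ν h ν₁ p) ^ 2 * hε2
  have hH : 2 * Hm f ν h ν₁ p * (Et f p * Gt h p - Ft f h p ^ 2) =
      Et f p * Nt1 h ν₁ p - 2 * Ft f h p * Mt h ν p + Gt h p * Lt f ν p := by
    rw [Hm]; field_simp
  have hK : Kg f ν h ν₁ p * (Et f p * Gt h p - Ft f h p ^ 2) =
      Lt f ν p * Nt1 h ν₁ p - Mt h ν p ^ 2 :=
    div_mul_cancel₀ _ hdet
  linear_combination (Et f p * Gt h p - Ft f h p ^ 2) * hquad + kap f ν h ν₁ ε p * hH - hK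

lemma VD_mk_zero {E : Type*} [NormedAddCommGroup E] [NormedSpace ℝ E] (g : ℝ × ℝ → E) (u : ℝ) :
    VD f ν h ν₁ ε g (u, 0) = V2c f ν h ν₁ ε (u, 0) • pv g (u, 0) := by
  simp [VD, V1c]

lemma VD_inv {g : ℝ × ℝ → ℝ} (hg : DifferentiableAt ℝ g p) (hgp : g p ≠ 0) :
    VD f ν h ν₁ ε g⁻¹ p = -(g p ^ 2)⁻¹ * VD f ν h ν₁ ε g p := by
  have hinv : fderiv ℝ g⁻¹ p = -(g p ^ 2)⁻¹ • fderiv ℝ g p :=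
    ((hasDerivAt_inv hgp).comp_hasFDerivAt p hg.hasFDerivAt).fderiv
  simp only [VD, pu, pv, hinv, smul_apply, smul_eq_mul]
  ring

lemma fderiv_VD_inv_of_VD_eq_zero {g : ℝ × ℝ → ℝ} (hg : ContDiffAt ℝ 1 g p) (hgp : g p ≠ 0)
    (hVg : DifferentiableAt ℝ (VD f ν h ν₁ ε g) p) (hVg0 : VD f ν h ν₁ ε g p = 0) :
    fderiv ℝ (VD f ν h ν₁ ε g⁻¹) p = -(g p ^ 2)⁻¹ • fderiv ℝ (VD f ν h ν₁ ε g) p := by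
  have heq : VD f ν h ν₁ ε g⁻¹ =ᶠ[nhds p] fun q ↦ -(g q ^ 2)⁻¹ * VD f ν h ν₁ ε g q := by
    filter_upwards [hg.eventually (by simp), hg.continuousAt.eventually_ne hgp] with q hq hgq
    exact VD_inv (hq.differentiableAt one_ne_zero) hgq
  have hcoef : DifferentiableAt ℝ (fun q ↦ -(g q ^ 2)⁻¹) p :=
    (((hg.differentiableAt one_ne_zero).pow 2).inv (pow_ne_zero 2 hgp)).neg
  rw [heq.fderiv_eq, fderiv_fun_mul hcoef hVg, hVg0, zero_smul, add_zero]

end PrincipalField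

namespace AdaptedPureFrontal

variable {f ν h ν₁ : ℝ × ℝ → R3} {ε u : ℝ}

lemma Et_mk_zero (H : AdaptedPureFrontal f ν h ν₁) (u : ℝ) : Et f (u, 0) = 1 :=
  H.adapted_fu u

lemma Ft_mk_zero (H : AdaptedPureFrontal f ν h ν₁) (u : ℝ) : Ft f h (u, 0) = 0 :=
  H.adapted_fu_h u

lemma Gt_mk_zero (H : AdaptedPureFrontal f ν h ν₁) (u : ℝ) : Gt h (u, 0) = 1 :=
  H.adapted_h u

lemma Et_mul_Gt_sub_Ft_sq_mk_zero (H : AdaptedPureFrontal f ν h ν₁) (u : ℝ) :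
    Et f (u, 0) * Gt h (u, 0) - Ft f h (u, 0) ^ 2 = 1 := by
  simp [H.Et_mk_zero, H.Ft_mk_zero, H.Gt_mk_zero]

lemma Hm_sq_sub_Kg_mk_zero (H : AdaptedPureFrontal f ν h ν₁) (u : ℝ) :
    Hm f ν h ν₁ (u, 0) ^ 2 - Kg f ν h ν₁ (u, 0) =
      ((Lt f ν (u, 0) - Nt1 h ν₁ (u, 0)) / 2) ^ 2 + kt h ν u ^ 2 := by
  simp only [Hm, Kg, kt, H.Et_mk_zero, H.Ft_mk_zero, H.Gt_mk_zero]
  ring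

lemma Hm_sq_sub_Kg_mk_zero_pos (H : AdaptedPureFrontal f ν h ν₁) (hkt : kt h ν u ≠ 0) :
    0 < Hm f ν h ν₁ (u, 0) ^ 2 - Kg f ν h ν₁ (u, 0) := by
  rw [H.Hm_sq_sub_Kg_mk_zero]
  positivity

lemma contDiffAt_kap_mk_zero (H : AdaptedPureFrontal f ν h ν₁) (hkt : kt h ν u ≠ 0) :
    ContDiffAt ℝ ∞ (kap f ν h ν₁ ε) (u, 0) :=
  contDiffAt_kap H.smooth_f.contDiffAt H.smooth_ν.contDiffAt H.smooth_h.contDiffAt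
    H.smooth_ν₁.contDiffAt (by simp [H.Et_mul_Gt_sub_Ft_sq_mk_zero])
    (H.Hm_sq_sub_Kg_mk_zero_pos hkt).ne'

lemma contDiffAt_VD_kap_mk_zero (H : AdaptedPureFrontal f ν h ν₁) (hkt : kt h ν u ≠ 0) :
    ContDiffAt ℝ ∞ (VD f ν h ν₁ ε (kap f ν h ν₁ ε)) (u, 0) :=
  contDiffAt_VD H.smooth_f.contDiffAt H.smooth_ν.contDiffAt H.smooth_h.contDiffAt
    (H.contDiffAt_kap_mk_zero hkt) (H.contDiffAt_kap_mk_zero hkt)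

lemma V2c_mk_zero_ne_zero (H : AdaptedPureFrontal f ν h ν₁) (hε : ε = 1 ∨ ε = -1)
    (hkt : kt h ν u ≠ 0) : V2c f ν h ν₁ ε (u, 0) ≠ 0 := by
  have hchar := kap_characteristic_eq hε (by simp [H.Et_mul_Gt_sub_Ft_sq_mk_zero])
    (H.Hm_sq_sub_Kg_mk_zero_pos hkt).le
  rw [H.Ft_mk_zero, mul_zero, sub_zero] at hchar
  exact left_ne_zero_of_mul (hchar.trans_ne (pow_ne_zero 2 hkt))

end AdaptedPureFrontal

theorem stmt_15_general {f ν h ν₁ : ℝ × ℝ → R3} (H : AdaptedPureFrontal f ν h ν₁)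
    {ε : ℝ} (hε : ε = 1 ∨ ε = -1) {u : ℝ} (hκ : kap f ν h ν₁ ε (u, 0) ≠ 0)
    (hkt : kt h ν u ≠ 0) (hridge : VD f ν h ν₁ ε (kap f ν h ν₁ ε) (u, 0) = 0) :
    VD f ν h ν₁ ε (VD f ν h ν₁ ε (kap f ν h ν₁ ε)) (u, 0) = 0 ↔
      pv (VD f ν h ν₁ ε (rho f ν h ν₁ ε)) (u, 0) = 0 := by
  have hVVκ : VD f ν h ν₁ ε (VD f ν h ν₁ ε (kap f ν h ν₁ ε)) (u, 0) = 0 ↔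
      pv (VD f ν h ν₁ ε (kap f ν h ν₁ ε)) (u, 0) = 0 := by
    rw [VD_mk_zero, smul_eq_zero_iff_right (H.V2c_mk_zero_ne_zero hε hkt)]
  have hκ1 : ContDiffAt ℝ 1 (kap f ν h ν₁ ε) (u, 0) :=
    (H.contDiffAt_kap_mk_zero hkt).of_le (by simp)
  have hVκ : DifferentiableAt ℝ (VD f ν h ν₁ ε (kap f ν h ν₁ ε)) (u, 0) :=
    (H.contDiffAt_VD_kap_mk_zero hkt).differentiableAt (by simp)
  have hVρ : pv (VD f ν h ν₁ ε (rho f ν h ν₁ ε)) (u, 0) =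
      -(kap f ν h ν₁ ε (u, 0) ^ 2)⁻¹ * pv (VD f ν h ν₁ ε (kap f ν h ν₁ ε)) (u, 0) :=
    DFunLike.congr_fun (fderiv_VD_inv_of_VD_eq_zero hκ1 hκ hVκ hridge) (0, 1)
  have hfactor : -(kap f ν h ν₁ ε (u, 0) ^ 2)⁻¹ ≠ 0 :=
    neg_ne_zero.2 (inv_ne_zero (pow_ne_zero 2 hκ))
  rw [hVVκ, hVρ, mul_eq_zero_iff_left hfactor]

/-- if κ_t(0) ≠ 0, 0 is a non-degenerate singular point of C_j and a
V_j-ridge point, then 0 is an at least second order V_j-ridge point of f iff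
∂_v(V_jρ_j)(0) = 0, i.e. iff the tangent direction of the singular curve of C_j at 0
is the null direction ∂_v (0 is a singular point of the second kind of C_j). -/
theorem stmt_15 (f ν h ν₁ : ℝ × ℝ → R3) (H : AdaptedPureFrontal f ν h ν₁)
    (ε : ℝ) (hε : ε = 1 ∨ ε = -1)
    (hHK : ∀ p : ℝ × ℝ, Hm f ν h ν₁ p ^ 2 - Kg f ν h ν₁ p > 0)
    (hκ : ∀ p : ℝ × ℝ, kap f ν h ν₁ ε p ≠ 0)
    (hkt : kt h ν 0 ≠ 0)
    (hsing : VD f ν h ν₁ ε (rho f ν h ν₁ ε) 0 = 0)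
    (hnd : pu (VD f ν h ν₁ ε (rho f ν h ν₁ ε)) 0 ≠ 0 ∨
      pv (VD f ν h ν₁ ε (rho f ν h ν₁ ε)) 0 ≠ 0)
    (hridge : VD f ν h ν₁ ε (kap f ν h ν₁ ε) 0 = 0) :
    VD f ν h ν₁ ε (VD f ν h ν₁ ε (kap f ν h ν₁ ε)) 0 = 0 ↔
      pv (VD f ν h ν₁ ε (rho f ν h ν₁ ε)) 0 = 0 :=
  stmt_15_general H hε (hκ 0) hkt hridge
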